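/- Let w be a word with m letters 𝗇 and n letters 𝖾. Then there exist polynomials c_0, c_1, …, c_{m_w} in q with nonnegative integer coefficients such that in the path algebra 𝒫 one has w = Σ_{k=0}^{m_w} (−1)^{m_w−k} · c_k · δ_k, where δ_k = 𝖾^{n−k}(𝗇𝖾)^k𝗇^{m−k} are the staircase monomials. In particular, in the (unique) expansion of w in the staircase basis of 𝒫_{m,n}, the coefficient of δ_k vanishes for k > m_w. -/

import Mathlib

noncomputable section

/-- The base field `F = ℂ(q)`. -/
abbrev F : Type := RatFunc ℂ

/-- The indeterminate `q`. -/
def qq : F := RatFunc.X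

/-- The `q`-integer `[j]_q = 1 + q + ⋯ + q^(j-1)`. -/
def qint (j : ℕ) : F := ∑ i ∈ Finset.range j, qq ^ i

/-- The `q`-factorial `[j]_q! = [1]_q ⋯ [j]_q`. -/
def qfact (j : ℕ) : F := ∏ i ∈ Finset.range j, qint (i + 1)

/-- Modular relations defining the path algebra `𝒫`; the letter `true` is `𝗇`,
the letter `false` is `𝖾`. -/
inductive PathRel : FreeAlgebra F Bool → FreeAlgebra F Bool → Prop where
  | mod1 : PathRel
      ((1 + qq) • (FreeAlgebra.ι F false * FreeAlgebra.ι F true * FreeAlgebra.ι F false))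
      (qq • (FreeAlgebra.ι F false * FreeAlgebra.ι F false * FreeAlgebra.ι F true) +
        FreeAlgebra.ι F true * FreeAlgebra.ι F false * FreeAlgebra.ι F false)
  | mod2 : PathRel
      ((1 + qq) • (FreeAlgebra.ι F true * FreeAlgebra.ι F false * FreeAlgebra.ι F true))
      (qq • (FreeAlgebra.ι F false * FreeAlgebra.ι F true * FreeAlgebra.ι F true) +
        FreeAlgebra.ι F true * FreeAlgebra.ι F true * FreeAlgebra.ι F false)

/-- The path algebra `𝒫`. -/
abbrev PathAlg : Type := RingQuot PathRel

/-- The generator `𝗇` of `𝒫`. -/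
def Pn : PathAlg := RingQuot.mkAlgHom F PathRel (FreeAlgebra.ι F true)

/-- The generator `𝖾` of `𝒫`. -/
def Pe : PathAlg := RingQuot.mkAlgHom F PathRel (FreeAlgebra.ι F false)

/-- The element of `𝒫` determined by a word in `𝗇` (`true`) and `𝖾` (`false`). -/
def wordElem (w : List Bool) : PathAlg := (w.map fun b => if b then Pn else Pe).prod

/-- `𝒫_{m,n}`: the span of words with `m` letters `𝗇` and `n` letters `𝖾`. -/
def Pmn (m n : ℕ) : Submodule F PathAlg :=
  Submodule.span F {x | ∃ w : List Bool, w.count true = m ∧ w.count false = n ∧ x = wordElem w}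

/-- `lam` (0-indexed list of parts) is a partition contained in the `m × n` box. -/
def IsPartitionIn (m n : ℕ) (lam : ℕ → ℕ) : Prop :=
  (∀ i j, i ≤ j → lam j ≤ lam i) ∧ (∀ i, lam i ≤ n) ∧ (∀ i, m ≤ i → lam i = 0)

/-- `eastBefore w r` = number of east steps (`false`) preceding the `(r+1)`-st
north step (`true`) of `w`. -/
def eastBefore : List Bool → ℕ → ℕ
  | [], _ => 0
  | true :: _, 0 => 0
  | true :: w, r + 1 => eastBefore w r
  | false :: w, r => eastBefore w r + 1

/-- `northBefore w r` = number of north steps (`true`) preceding the `(r+1)`-st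
east step (`false`) of `w`. -/
def northBefore : List Bool → ℕ → ℕ
  | [], _ => 0
  | false :: _, 0 => 0
  | false :: w, r + 1 => northBefore w r
  | true :: w, r => northBefore w r + 1

/-- The partition `λ(w)` of a word with `m` letters `𝗇`, as a 0-indexed function:
row `i` (from the top) of the partition has `eastBefore w (m-1-i)` cells. -/
def wordLam (m : ℕ) (w : List Bool) : ℕ → ℕ :=
  fun i => if i < m then eastBefore w (m - 1 - i) else 0

/-- The word `w(λ)` of a partition `λ ⊆ m × n` (given as 0-indexed `lam : ℕ → ℕ`). -/
def wordOf (m n : ℕ) (lam : ℕ → ℕ) : List Bool :=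
  ((List.range m).flatMap fun k =>
    List.replicate (lam (m - 1 - k) - lam (m - k)) false ++ [true]) ++
    List.replicate (n - lam 0) false

/-- The rook in column `j` of the placement `ρ` lies inside the Ferrers board of `lam`. -/
def rookInside (m n : ℕ) (lam : ℕ → ℕ) (ρ : Fin n ↪ Fin m) (j : Fin n) : Prop :=
  (j : ℕ) < lam (ρ j)

/-- The cell in row `i` (0-indexed from the top) and column `j` (0-indexed from the left)
is unattacked for the maximal non-attacking rook placement `ρ` (with the Ferrers board of
`lam` drawn in the top-left corner of the `m × n` board). -/
def Unattacked (m n : ℕ) (lam : ℕ → ℕ) (ρ : Fin n ↪ Fin m) (i : Fin m) (j : Fin n) : Prop :=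
  ρ j ≠ i ∧ ¬ ((ρ j : ℕ) < (i : ℕ)) ∧
    (if (j : ℕ) < lam i then
      (∀ j' : Fin n, ρ j' = i → ¬ (j' < j)) ∧
      (∀ j' : Fin n, ρ j' = i → j < j' → (j' : ℕ) < lam i)
    else
      ∀ j' : Fin n, ρ j' = i → j' < j → (j' : ℕ) < lam i)

/-- `stat ρ` = number of unattacked cells. -/
def statRook (m n : ℕ) (lam : ℕ → ℕ) (ρ : Fin n ↪ Fin m) : ℕ :=
  Set.ncard {p : Fin m × Fin n | Unattacked m n lam ρ p.1 p.2}

/-- The `q`-hit number `H_k^{m,n}(λ)`. -/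
def qHit (m n : ℕ) (lam : ℕ → ℕ) (k : ℕ) : F :=
  ∑ ρ : Fin n ↪ Fin m,
    if Set.ncard {j : Fin n | rookInside m n lam ρ j} = k then qq ^ statRook m n lam ρ else 0

/-- A Dyck word of size `N`. -/
def IsDyck (N : ℕ) (w : List Bool) : Prop :=
  w.count true = N ∧ w.count false = N ∧
    ∀ p : ℕ, (w.take p).count false ≤ (w.take p).count true

/-- Adjacency of the Dyck graph `G(D)` of a Dyck word of size `N` on vertices `Fin N`
(0-indexed: vertex `a` is the vertex `a+1` of `{1,…,N}`). -/
def dyckAdj (N : ℕ) (w : List Bool) (a b : Fin N) : Prop :=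
  ((a : ℕ) < b ∧ (b : ℕ) < northBefore w a) ∨ ((b : ℕ) < a ∧ (a : ℕ) < northBefore w b)

/-- Proper colorings of the Dyck graph `G(w)` with `ν` colors. -/
def properColorings (N ν : ℕ) (w : List Bool) : Set (Fin N → Fin ν) :=
  {κ | ∀ a b : Fin N, dyckAdj N w a b → κ a ≠ κ b}

/-- Number of ascents of a coloring. -/
def ascColor (N ν : ℕ) (w : List Bool) (κ : Fin N → Fin ν) : ℕ :=
  Set.ncard {p : Fin N × Fin N | (p.1 : ℕ) < p.2 ∧ dyckAdj N w p.1 p.2 ∧ κ p.1 < κ p.2}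

open scoped Classical in
/-- The chromatic quasisymmetric polynomial `X_{G(w)}(x_1,…,x_ν; q)`. -/
def chromX (N ν : ℕ) (w : List Bool) : MvPolynomial (Fin ν) F :=
  ∑ κ : Fin N → Fin ν,
    if κ ∈ properColorings N ν w then
      MvPolynomial.C (qq ^ ascColor N ν w κ) * ∏ a : Fin N, MvPolynomial.X (κ a)
    else 0

/-- The staircase word `δ_k = 𝖾^{n-k}(𝗇𝖾)^k𝗇^{m-k}`. -/
def deltaWord (m n k : ℕ) : List Bool :=
  List.replicate (n - k) false ++ (List.replicate k [true, false]).flatten ++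
    List.replicate (m - k) true

/-- `m_w`: the largest `k` with `λ(w) ⊆ λ(δ_k)`, i.e. such that the path of `δ_k`
lies weakly below the path of `w`. -/
def mw (m n : ℕ) (w : List Bool) : ℕ :=
  Finset.sup ((Finset.range (min m n + 1)).filter fun k =>
    ∀ i ∈ Finset.range m, wordLam m w i ≤ wordLam m (deltaWord m n k) i) id

/-- The lattice paths of `w` and `d` share the unit step of `w` corresponding to
the letter at (0-indexed) position `p` of `w`. -/
def StepShared (w d : List Bool) (p : ℕ) : Prop :=
  ∃ p' : ℕ, p' < d.length ∧ d[p']? = w[p]? ∧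
    (d.take p').count true = (w.take p).count true ∧
    (d.take p').count false = (w.take p).count false

/-- `w` possesses a critical factor: a factor `𝗇^i𝖾` or `𝗇𝖾^i` with `i ≥ 2`, whose run of
repeated letters is maximal within `w`, and whose letters contain a unit step shared by
the lattice paths of `w` and of `δ_{m_w}`. -/
def HasCriticalFactor (m n : ℕ) (w : List Bool) : Prop :=
  ∃ (x y : List Bool) (i : ℕ), 2 ≤ i ∧
    ((w = x ++ (List.replicate i true ++ [false]) ++ y ∧ x.getLast? ≠ some true ∧
        ∃ p, x.length ≤ p ∧ p < x.length + i + 1 ∧ StepShared w (deltaWord m n (mw m n w)) p) ∨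
      (w = x ++ ([true] ++ List.replicate i false) ++ y ∧ y.head? ≠ some false ∧
        ∃ p, x.length ≤ p ∧ p < x.length + i + 1 ∧ StepShared w (deltaWord m n (mw m n w)) p))

/-- Evaluation of a (commutative) polynomial in two variables at the commuting elements
`s`, `t` of `𝒫`. -/
def evalST (s t : PathAlg) (P : MvPolynomial (Fin 2) F) : PathAlg :=
  ∑ d ∈ P.support, P.coeff d • (s ^ (d 0) * t ^ (d 1))

/-- The conjugate partition: `conjP m lam i = λ'_i = #{rows r : λ_r ≥ i}` (here `i ≥ 1`,
rows 0-indexed, `lam` supported on `[0, m)`). -/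
def conjP (m : ℕ) (lam : ℕ → ℕ) (i : ℕ) : ℕ :=
  ((Finset.range m).filter fun r => i ≤ lam r).card

/-- The sequence `b(λ) = (b_1,…,b_n)` (1-indexed `i`) for `λ ⊆ m × n`, `m ≥ n`. -/
def bSeq (m : ℕ) (lam : ℕ → ℕ) (i : ℕ) : ℤ :=
  if lam (m - i) < i then (m : ℤ) + 1 - i - conjP m lam i else (i : ℤ) - lam (m - i)

/-- The element `wt_i ∈ 𝒫`. -/
def wt (i : ℤ) : PathAlg :=
  if 1 ≤ i then qint i.toNat • (Pn * Pe) - (qq * qint (i - 1).toNat) • (Pe * Pn)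
  else (qq ^ i) • (qint (1 - i).toNat • (Pe * Pn) - qint (-i).toNat • (Pn * Pe))

/-- The defining relations of the `q`-Klyachko algebra. -/
def klyRels : Set (MvPolynomial ℤ F) :=
  {x | ∃ i : ℤ, x = MvPolynomial.C (1 + qq) * (MvPolynomial.X i * MvPolynomial.X i) -
    (MvPolynomial.C qq * (MvPolynomial.X i * MvPolynomial.X (i - 1)) +
      MvPolynomial.X i * MvPolynomial.X (i + 1))}

/-- The `q`-Klyachko algebra `𝒦`. -/
abbrev Kly : Type := MvPolynomial ℤ F ⧸ Ideal.span klyRels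

/-- The generator `u_i` of `𝒦`. -/
def uK (i : ℤ) : Kly := Ideal.Quotient.mk (Ideal.span klyRels) (MvPolynomial.X i)

/-- The element `u(λ) = u_{a_1} ⋯ u_{a_m}` of `𝒦`, where `a(λ)` is the area sequence
of `λ ⊆ m × m` (here `a_{i+1} = (i+1) - λ_{m-i}` with `lam` 0-indexed). -/
def uLam (m : ℕ) (lam : ℕ → ℕ) : Kly :=
  ∏ i ∈ Finset.range m, uK ((i : ℤ) + 1 - lam (m - 1 - i))

/-- The partition `λ(G(D))` of a Dyck word of size `N`, 0-indexed:
`λ_{i+1} = N - h_{i+1}(D)`. -/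
def lamG (N : ℕ) (D : List Bool) : ℕ → ℕ :=
  fun i => if i < N then N - northBefore D i else 0

/-- The number of nonzero parts of `λ(G(D))`. -/
def ellG (N : ℕ) (D : List Bool) : ℕ :=
  ((Finset.range N).filter fun i => N - northBefore D i ≠ 0).card

/-- The Dyck graph `G(D)` is abelian. -/
def IsAbelian (N : ℕ) (D : List Bool) : Prop := lamG N D 0 + ellG N D ≤ N

/-- `r` is an acyclic orientation of the graph with adjacency `adj` on `Fin N`. -/
def IsAcyclicOrientation (N : ℕ) (adj : Fin N → Fin N → Prop)
    (r : Fin N → Fin N → Bool) : Prop :=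
  (∀ a b, r a b = true → adj a b) ∧
  (∀ a b, adj a b → (r a b = true ↔ ¬ r b a = true)) ∧
  (∀ a, ¬ Relation.TransGen (fun u v => r u v = true) a a)

/-- Number of ascents of an orientation. -/
def ascOrient (N : ℕ) (r : Fin N → Fin N → Bool) : ℕ :=
  Set.ncard {p : Fin N × Fin N | r p.1 p.2 = true ∧ (p.1 : ℕ) < p.2}

/-- Remove from `S` the sources of the orientation restricted to `S`. -/
def peel (N : ℕ) (r : Fin N → Fin N → Bool) (S : Set (Fin N)) : Set (Fin N) :=
  {v ∈ S | ∃ u ∈ S, r u v = true}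

/-- Number of sources of the orientation restricted to `S`. -/
def numSources (N : ℕ) (r : Fin N → Fin N → Bool) (S : Set (Fin N)) : ℕ :=
  Set.ncard {v ∈ S | ∀ u ∈ S, ¬ r u v = true}

open scoped Classical in
/-- `initial(A)`: the number of leading entries of the source sequence equal to `2`. -/
def initialA (N : ℕ) (r : Fin N → Fin N → Bool) : ℕ :=
  Finset.sup ((Finset.range (N + 1)).filter fun j =>
    ∀ k < j, numSources N r ((peel N r)^[k] Set.univ) = 2) id

end

/-!
Along the path of a word `w` record the height `#𝗇 - #𝖾`; then `m_w = n + h`, where `h ≤ 0` is the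
minimal height reached. The defining relations say that `𝗇` and `𝖾` `q`-commute with
`[𝗇, 𝖾] = 𝗇𝖾 - 𝖾𝗇`, whence
`𝗇^{j+1}𝖾 = [j+1] 𝗇𝖾𝗇^j - q[j] 𝖾𝗇^{j+1}` and `𝗇𝖾^{j+1} = [j+1] 𝖾^j𝗇𝖾 - q[j] 𝖾^{j+1}𝗇`.
Unless `w` is a staircase word, one of these relations with `j ≥ 1` applies next to a point of
minimal height: the first word on the right then has the same minimal height as `w`, the second one
a minimal height smaller by exactly one, so each descent is accompanied by exactly one sign. Both
words have fewer inversions than `w`, and induction gives the expansion.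

For the vanishing of the other coefficients, let `𝗇` act on functions `ℤ → F` as the shift and `𝖾`
as the inverse shift weighted by `1 - q^i`. The values of `δ_k · 1` at the integers `n - k` form a
triangular matrix with nonzero diagonal, so the staircase monomials are linearly independent.
-/

section LinearAlgebra

lemma linearIndependent_of_dual_triangular {ι R M : Type*} [LinearOrder ι] [CommRing R]
    [NoZeroDivisors R] [AddCommGroup M] [Module R M] {v : ι → M} (φ : ι → Module.Dual R M)
    (hdiag : ∀ i, φ i (v i) ≠ 0) (hlower : ∀ i j, j < i → φ i (v j) = 0) :
    LinearIndependent R v := by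
  rw [linearIndependent_iff']
  intro s g
  induction s using Finset.induction_on_max with
  | empty => simp
  | insert a s hs ih =>
    intro hsum
    rw [Finset.sum_insert fun has => (hs a has).false] at hsum
    have hφ : ∑ i ∈ s, g i * φ a (v i) = 0 :=
      Finset.sum_eq_zero fun i hi => by rw [hlower a i (hs i hi), mul_zero]
    have hga : g a = 0 := by
      have h := congrArg (φ a) hsum
      simp only [map_add, map_sum, map_smul, smul_eq_mul, map_zero, hφ, add_zero] at h
      exact (mul_eq_zero.1 h).resolve_right (hdiag a)
    rw [hga, zero_smul, zero_add] at hsum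
    exact Finset.forall_mem_insert _ _ _ |>.2 ⟨hga, ih hsum⟩

lemma eq_zero_of_sum_smul_eq_sum_smul {ι R M : Type*} [Semiring R] [AddCommMonoid M] [Module R M]
    {v : ι → M} {s t : Finset ι} (hv : LinearIndepOn R v (t : Set ι)) (hst : s ⊆ t) {a d : ι → R}
    (h : ∑ i ∈ s, a i • v i = ∑ i ∈ t, d i • v i) {k : ι} (hk : k ∈ t) (hks : k ∉ s) :
    d k = 0 := by
  classical
  have hext : ∑ i ∈ t, d i • v i = ∑ i ∈ t, (if i ∈ s then a i else 0) • v i := by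
    simp only [← h, ite_smul, zero_smul, Finset.sum_ite_mem, Finset.inter_eq_right.2 hst]
  simpa [hks] using linearIndepOn_finset_iffₛ.1 hv _ _ hext k hk

end LinearAlgebra

section AlternatingExpansion

variable {R V : Type*} [CommRing R] [AddCommGroup V] [Module R V]

/-- `x` is a combination of `v 0, …, v M` in which the coefficient of `v k` is `(-1)^(M-k)` times a
polynomial in `q` with nonnegative integer coefficients. -/
def HasAlternatingExpansion (q : R) (v : ℕ → V) (M : ℕ) (x : V) : Prop :=
  ∃ c : ℕ → Polynomial ℕ, x = ∑ k ∈ Finset.range (M + 1),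
    ((-1) ^ (M - k) * Polynomial.eval₂ (Nat.castRingHom R) q (c k)) • v k

lemma hasAlternatingExpansion_self (q : R) (v : ℕ → V) (M : ℕ) :
    HasAlternatingExpansion q v M (v M) := by
  refine ⟨Pi.single M 1, ?_⟩
  rw [Finset.sum_range_succ, Finset.sum_eq_zero, zero_add]
  · simp
  · intro k hk
    simp [(Finset.mem_range.1 hk).ne]

lemma HasAlternatingExpansion.smul_sub_smul {q : R} {v : ℕ → V} {M : ℕ} {x y : V}
    (hx : HasAlternatingExpansion q v (M + 1) x) (hy : HasAlternatingExpansion q v M y)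
    (a b : Polynomial ℕ) :
    HasAlternatingExpansion q v (M + 1)
      (Polynomial.eval₂ (Nat.castRingHom R) q a • x -
        Polynomial.eval₂ (Nat.castRingHom R) q b • y) := by
  obtain ⟨c, rfl⟩ := hx
  obtain ⟨d, rfl⟩ := hy
  refine ⟨fun k => a * c k + if k ≤ M then b * d k else 0, ?_⟩
  simp only [Finset.sum_range_succ _ (M + 1), smul_add, Finset.smul_sum, add_sub_right_comm,
    ← Finset.sum_sub_distrib]
  congr 1
  · refine Finset.sum_congr rfl fun k hk => ?_
    have hkM : k ≤ M := Nat.lt_succ_iff.1 (Finset.mem_range.1 hk)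
    simp only [if_pos hkM, Nat.succ_sub hkM, pow_succ, Polynomial.eval₂_add, Polynomial.eval₂_mul,
      smul_smul, ← sub_smul]
    ring_nf
  · simp [smul_smul]

end AlternatingExpansion

section Commutation

variable {R A : Type*} [CommRing R] [Ring A] [Algebra R A] {q : R} {x y : A}

lemma pow_succ_mul_sub_mul_pow_succ (h : x * (x * y - y * x) = q • ((x * y - y * x) * x)) (j : ℕ) :
    x ^ (j + 1) * y - y * x ^ (j + 1) =
      (∑ i ∈ Finset.range (j + 1), q ^ i) • ((x * y - y * x) * x ^ j) := by
  induction j with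
  | zero => simp
  | succ j ih =>
    calc x ^ (j + 2) * y - y * x ^ (j + 2)
        = x * (x ^ (j + 1) * y - y * x ^ (j + 1)) + (x * y - y * x) * x ^ (j + 1) := by
          rw [pow_succ' x (j + 1)]
          noncomm_ring
      _ = (∑ i ∈ Finset.range (j + 1), q ^ i) • q • ((x * y - y * x) * x ^ (j + 1)) +
            (x * y - y * x) * x ^ (j + 1) := by
          rw [ih, mul_smul_comm, ← mul_assoc, h, smul_mul_assoc, mul_assoc, ← pow_succ']
      _ = _ := by
          rw [geom_sum_succ (n := j + 1), add_smul, one_smul, smul_smul, mul_comm q]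

lemma pow_succ_mul_of_modular
    (h : (1 + q) • (x * y * x) = q • (y * x * x) + x * x * y) (j : ℕ) :
    x ^ (j + 1) * y = (∑ i ∈ Finset.range (j + 1), q ^ i) • (x * y * x ^ j) -
      (q * ∑ i ∈ Finset.range j, q ^ i) • (y * x ^ (j + 1)) := by
  have hcomm : x * (x * y - y * x) = q • ((x * y - y * x) * x) := by
    have h' : x * x * y = x * y * x + q • (x * y * x) - q • (y * x * x) := by
      rw [eq_sub_iff_add_eq', ← h, add_smul, one_smul]
    rw [mul_sub, ← mul_assoc, ← mul_assoc, h', sub_mul, smul_sub]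
    abel
  calc x ^ (j + 1) * y
      = (∑ i ∈ Finset.range (j + 1), q ^ i) • (x * y * x ^ j - y * x ^ (j + 1)) +
          y * x ^ (j + 1) := by
        rw [← sub_eq_iff_eq_add, pow_succ_mul_sub_mul_pow_succ hcomm, sub_mul, mul_assoc y x,
          ← pow_succ']
    _ = _ := by
        rw [geom_sum_succ]
        module

-- The relation satisfied by `x` and `y` here is the previous one in the opposite algebra.
lemma mul_pow_succ_of_modular
    (h : (1 + q) • (x * y * x) = q • (x * x * y) + y * x * x) (j : ℕ) :
    y * x ^ (j + 1) = (∑ i ∈ Finset.range (j + 1), q ^ i) • (x ^ j * y * x) -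
      (q * ∑ i ∈ Finset.range j, q ^ i) • (x ^ (j + 1) * y) := by
  have hop : (1 + q) • (MulOpposite.op x * MulOpposite.op y * MulOpposite.op x) =
      q • (MulOpposite.op y * MulOpposite.op x * MulOpposite.op x) +
        MulOpposite.op x * MulOpposite.op x * MulOpposite.op y := by
    simpa [mul_assoc] using congrArg MulOpposite.op h
  simpa [mul_assoc] using congrArg MulOpposite.unop (pow_succ_mul_of_modular hop j)

end Commutation

section PathAlgebra

lemma Pe_mul_Pn_mul_Pe : (1 + qq) • (Pe * Pn * Pe) = qq • (Pe * Pe * Pn) + Pn * Pe * Pe := by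
  simpa [Pn, Pe] using RingQuot.mkAlgHom_rel F PathRel.mod1

lemma Pn_mul_Pe_mul_Pn : (1 + qq) • (Pn * Pe * Pn) = qq • (Pe * Pn * Pn) + Pn * Pn * Pe := by
  simpa [Pn, Pe] using RingQuot.mkAlgHom_rel F PathRel.mod2

lemma Pn_pow_succ_mul_Pe (j : ℕ) : Pn ^ (j + 1) * Pe =
    qint (j + 1) • (Pn * Pe * Pn ^ j) - (qq * qint j) • (Pe * Pn ^ (j + 1)) :=
  pow_succ_mul_of_modular Pn_mul_Pe_mul_Pn j

lemma Pn_mul_Pe_pow_succ (j : ℕ) : Pn * Pe ^ (j + 1) =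
    qint (j + 1) • (Pe ^ j * Pn * Pe) - (qq * qint j) • (Pe ^ (j + 1) * Pn) :=
  mul_pow_succ_of_modular Pe_mul_Pn_mul_Pe j

@[simp] lemma wordElem_cons_true (w : List Bool) : wordElem (true :: w) = Pn * wordElem w := by
  simp [wordElem]

@[simp] lemma wordElem_cons_false (w : List Bool) : wordElem (false :: w) = Pe * wordElem w := by
  simp [wordElem]

@[simp] lemma wordElem_replicate_true_append (i : ℕ) (w : List Bool) :
    wordElem (List.replicate i true ++ w) = Pn ^ i * wordElem w := by
  simp [wordElem]

@[simp] lemma wordElem_replicate_false_append (i : ℕ) (w : List Bool) :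
    wordElem (List.replicate i false ++ w) = Pe ^ i * wordElem w := by
  simp [wordElem]

end PathAlgebra

section Heights

/-- The minimum over all prefixes of `w` of the height `#𝗇 - #𝖾` of the lattice path of `w`; for
a path ending at `(n, m)` it equals `m_w - n`. -/
def minHeight : List Bool → ℤ
  | [] => 0
  | b :: w => min 0 ((if b then 1 else -1) + minHeight w)

/-- The number of pairs consisting of a letter `𝗇` and a later letter `𝖾`; straightening a word
decreases it. -/
def inversions : List Bool → ℕ
  | [] => 0
  | true :: w => w.count false + inversions w
  | false :: w => inversions w

lemma minHeight_nonpos (w : List Bool) : minHeight w ≤ 0 := by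
  cases w <;> simp [minHeight]

@[simp] lemma minHeight_cons_true (w : List Bool) :
    minHeight (true :: w) = min 0 (1 + minHeight w) := by
  simp [minHeight]

@[simp] lemma minHeight_cons_false (w : List Bool) :
    minHeight (false :: w) = minHeight w - 1 := by
  have := minHeight_nonpos w
  simp only [minHeight]
  grind

@[simp] lemma minHeight_replicate_true_append (i : ℕ) (w : List Bool) :
    minHeight (List.replicate i true ++ w) = min 0 (i + minHeight w) := by
  have := minHeight_nonpos w
  induction i with
  | zero => simpa using this
  | succ i ih =>
    rw [List.replicate_succ, List.cons_append, minHeight_cons_true, ih]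
    lia

@[simp] lemma minHeight_replicate_false_append (i : ℕ) (w : List Bool) :
    minHeight (List.replicate i false ++ w) = minHeight w - i := by
  induction i with
  | zero => simp
  | succ i ih =>
    rw [List.replicate_succ, List.cons_append, minHeight_cons_false, ih]
    lia

@[simp] lemma inversions_replicate_true_append (i : ℕ) (w : List Bool) :
    inversions (List.replicate i true ++ w) = i * w.count false + inversions w := by
  induction i with
  | zero => simp
  | succ i ih =>
    rw [List.replicate_succ, List.cons_append, inversions, ih, List.count_append,
      List.count_replicate]
    grind

@[simp] lemma inversions_replicate_false_append (i : ℕ) (w : List Bool) :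
    inversions (List.replicate i false ++ w) = inversions w := by
  induction i with
  | zero => simp
  | succ i ih => simpa [List.replicate_succ, inversions] using ih

-- A path attains its minimal height immediately before a north step or at its end.
lemma le_minHeight_iff {w : List Bool} {t : ℤ} : t ≤ minHeight w ↔
    t ≤ (w.count true : ℤ) - w.count false ∧
      ∀ r < w.count true, t ≤ (r : ℤ) - eastBefore w r := by
  induction w generalizing t with
  | nil => simp [minHeight]
  | cons b w ih =>
    have := minHeight_nonpos w
    cases b with
    | false =>
      rw [minHeight_cons_false, le_sub_iff_add_le, ih]
      simp only [List.count_cons_self, List.count_cons_of_ne (by decide : false ≠ true), eastBefore]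
      grind
    | true =>
      rw [minHeight_cons_true, le_min_iff, ← sub_le_iff_le_add', ih]
      simp only [List.count_cons_self, List.count_cons_of_ne (by decide : true ≠ false),
        Nat.forall_lt_succ_left, eastBefore]
      grind

end Heights

section Staircase

lemma deltaWord_eq_append (m n k : ℕ) : deltaWord m n k = List.replicate (n - k) false ++
    ((List.replicate k [true, false]).flatten ++ List.replicate (m - k) true) :=
  List.append_assoc ..

lemma minHeight_staircase (b c : ℕ) :
    minHeight ((List.replicate b [true, false]).flatten ++ List.replicate c true) = 0 := by
  induction b with
  | zero => simpa [minHeight] using minHeight_replicate_true_append c []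
  | succ b ih => simp [List.replicate_succ, ih]

lemma minHeight_deltaWord (m n k : ℕ) : minHeight (deltaWord m n k) = -((n - k : ℕ) : ℤ) := by
  rw [deltaWord_eq_append, minHeight_replicate_false_append, minHeight_staircase, zero_sub]

lemma count_true_deltaWord {m k : ℕ} (n : ℕ) (hk : k ≤ m) :
    (deltaWord m n k).count true = m := by
  simp [deltaWord, List.count_flatten, List.count_replicate, hk]

lemma count_false_deltaWord (m : ℕ) {n k : ℕ} (hk : k ≤ n) :
    (deltaWord m n k).count false = n := by
  simp [deltaWord, List.count_flatten, List.count_replicate, hk]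

lemma eastBefore_le (w : List Bool) (r : ℕ) : eastBefore w r ≤ w.count false := by
  fun_induction eastBefore w r <;> simp_all

lemma eastBefore_replicate_false_append (a r : ℕ) (w : List Bool) :
    eastBefore (List.replicate a false ++ w) r = a + eastBefore w r := by
  induction a with
  | zero => simp
  | succ a ih =>
    simp only [List.replicate_succ, List.cons_append, eastBefore, ih]
    ring

lemma eastBefore_replicate_true (a r : ℕ) : eastBefore (List.replicate a true) r = 0 := by
  induction a generalizing r with
  | zero => rfl
  | succ a ih => cases r <;> simp [List.replicate_succ, eastBefore, ih]

lemma eastBefore_staircase {b c r : ℕ} (hr : r < b + c) :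
    eastBefore ((List.replicate b [true, false]).flatten ++ List.replicate c true) r =
      min r b := by
  induction b generalizing r with
  | zero => simpa using eastBefore_replicate_true c r
  | succ b ih =>
    cases r with
    | zero => simp [List.replicate_succ, eastBefore]
    | succ r =>
      simp only [List.replicate_succ, List.flatten_cons, List.cons_append, List.nil_append,
        eastBefore, ih (by lia : r < b + c)]
      lia

lemma eastBefore_deltaWord {m n k r : ℕ} (hk : k ≤ m) (hr : r < m) :
    eastBefore (deltaWord m n k) r = n - k + min r k := by
  rw [deltaWord_eq_append, eastBefore_replicate_false_append, eastBefore_staircase (by lia)]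

lemma wordLam_le_wordLam_deltaWord_iff {m n k : ℕ} {w : List Bool} (hn : w.count true = m)
    (he : w.count false = n) (hk : k ≤ min m n) :
    (∀ i ∈ Finset.range m, wordLam m w i ≤ wordLam m (deltaWord m n k) i) ↔
      (k : ℤ) ≤ n + minHeight w := by
  have hrow : (∀ i ∈ Finset.range m, wordLam m w i ≤ wordLam m (deltaWord m n k) i) ↔
      ∀ r < m, eastBefore w r ≤ n - k + min r k := by
    simp only [Finset.mem_range, wordLam]
    constructor
    · intro h r hr
      have := h (m - 1 - r) (by lia)
      rwa [if_pos (by lia), if_pos (by lia), Nat.sub_sub_self (by lia),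
        eastBefore_deltaWord (by lia) hr] at this
    · intro h i hi
      rw [if_pos hi, if_pos hi, eastBefore_deltaWord (by lia) (by lia)]
      exact h _ (by lia)
  rw [hrow, ← sub_le_iff_le_add', le_minHeight_iff, hn, he]
  have heast := eastBefore_le w
  grind

lemma mw_eq_add_minHeight {m n : ℕ} {w : List Bool} (hn : w.count true = m)
    (he : w.count false = n) : (mw m n w : ℤ) = n + minHeight w := by
  have hnonpos := minHeight_nonpos w
  have hlast := (le_minHeight_iff.1 (le_refl (minHeight w))).1
  have hnonneg : -(n : ℤ) ≤ minHeight w := le_minHeight_iff.2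
    ⟨by lia, fun r _ => by have := eastBefore_le w r; lia⟩
  obtain ⟨M, hM⟩ := Int.eq_ofNat_of_zero_le (by lia : 0 ≤ n + minHeight w)
  have hmem (k : ℕ) : k ∈ ((Finset.range (min m n + 1)).filter fun k =>
      ∀ i ∈ Finset.range m, wordLam m w i ≤ wordLam m (deltaWord m n k) i) ↔ k ≤ M := by
    rw [Finset.mem_filter, Finset.mem_range, Nat.lt_succ_iff]
    constructor
    · rintro ⟨hk, h⟩
      have := (wordLam_le_wordLam_deltaWord_iff hn he hk).1 h
      lia
    · intro hk
      have hkmn : k ≤ min m n := by lia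
      exact ⟨hkmn, (wordLam_le_wordLam_deltaWord_iff hn he hkmn).2 (by lia)⟩
  have hmw : mw m n w = M := le_antisymm
    (Finset.sup_le fun k hk => (hmem k).1 hk) (Finset.le_sup (f := id) ((hmem M).2 le_rfl))
  rw [hmw, hM]

lemma mw_le_min (m n : ℕ) (w : List Bool) : mw m n w ≤ min m n :=
  Finset.sup_le fun _ hk => Nat.lt_succ_iff.1 (Finset.mem_range.1 (Finset.mem_filter.1 hk).1)

lemma mw_deltaWord {m n k : ℕ} (hk : k ≤ min m n) : mw m n (deltaWord m n k) = k := by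
  have hmw := mw_eq_add_minHeight (count_true_deltaWord n (le_min_iff.1 hk).1)
    (count_false_deltaWord m (le_min_iff.1 hk).2)
  rw [minHeight_deltaWord] at hmw
  lia

end Staircase

section ModularStep

/-- A straightening step `w = [j+1] w₁ - q[j] w₂` in `𝒫`, where `w₁` and `w₂` are rearrangements of
`w` with fewer inversions, `w₁` has the minimal height of `w` and `w₂` one less. -/
structure ModularStep (j : ℕ) (w w₁ w₂ : List Bool) : Prop where
  perm_left : w₁.Perm w
  perm_right : w₂.Perm w
  inversions_left : inversions w₁ < inversions w
  inversions_right : inversions w₂ < inversions w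
  minHeight_left : minHeight w₁ = minHeight w
  minHeight_right : minHeight w₂ + 1 = minHeight w
  wordElem_eq : wordElem w = qint (j + 1) • wordElem w₁ - (qq * qint j) • wordElem w₂

lemma ModularStep.cons {j : ℕ} {w w₁ w₂ : List Bool} (h : ModularStep j w w₁ w₂) {b : Bool}
    (hb : b = true → minHeight w < 0) : ModularStep j (b :: w) (b :: w₁) (b :: w₂) where
  perm_left := h.perm_left.cons b
  perm_right := h.perm_right.cons b
  inversions_left := by
    cases b <;> simp [inversions, h.perm_left.count_eq, h.inversions_left]
  inversions_right := by
    cases b <;> simp [inversions, h.perm_right.count_eq, h.inversions_right]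
  minHeight_left := by rw [minHeight, minHeight, h.minHeight_left]
  minHeight_right := by
    have hright := h.minHeight_right
    cases b <;> simp only [minHeight_cons_true, minHeight_cons_false] <;> grind
  wordElem_eq := by
    cases b <;> simp [h.wordElem_eq, mul_sub]

lemma modularStep_north {j : ℕ} {w : List Bool} (hw : -((j : ℤ) + 1) ≤ minHeight w) :
    ModularStep (j + 1) (List.replicate (j + 2) true ++ false :: w)
      (true :: false :: (List.replicate (j + 1) true ++ w))
      (false :: (List.replicate (j + 2) true ++ w)) where
  perm_left := List.perm_middle.symm.cons true
  perm_right := List.perm_middle.symm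
  inversions_left := by
    simp only [inversions, List.count_cons_self, List.count_append, List.count_replicate,
      inversions_replicate_true_append]
    lia
  inversions_right := by simp [inversions]
  minHeight_left := by
    simp only [minHeight_cons_true, minHeight_cons_false, minHeight_replicate_true_append]
    lia
  minHeight_right := by
    simp only [minHeight_cons_false, minHeight_replicate_true_append]
    lia
  wordElem_eq := by
    have h := congrArg (· * wordElem w) (Pn_pow_succ_mul_Pe (j + 1))
    simpa [sub_mul, mul_assoc] using h

lemma modularStep_east {j : ℕ} {w : List Bool} (hw : minHeight w = 0) :
    ModularStep (j + 1) (true :: (List.replicate (j + 2) false ++ w))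
      (List.replicate (j + 1) false ++ true :: false :: w)
      (List.replicate (j + 2) false ++ true :: w) where
  perm_left := by
    rw [List.replicate_succ' (n := j + 1), List.append_assoc]
    exact List.perm_middle
  perm_right := List.perm_middle
  inversions_left := by
    simp only [inversions_replicate_false_append, inversions, List.count_cons_self,
      List.count_append, List.count_replicate_self]
    lia
  inversions_right := by simp [inversions]
  minHeight_left := by
    simp only [minHeight_replicate_false_append, minHeight_cons_true, minHeight_cons_false, hw]
    lia
  minHeight_right := by
    simp only [minHeight_replicate_false_append, minHeight_cons_true, hw]
    lia
  wordElem_eq := by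
    have h := congrArg (· * wordElem w) (Pn_mul_Pe_pow_succ (j + 1))
    simpa [sub_mul, mul_assoc] using h

lemma eq_replicate_true_or_eq_append_false (w : List Bool) :
    (∃ c, w = List.replicate c true) ∨ ∃ i z, w = List.replicate i true ++ false :: z := by
  by_cases h : false ∈ w
  · obtain ⟨u, z, rfl, hu⟩ := List.eq_append_cons_of_mem h
    have hu' : u = List.replicate u.length true :=
      List.eq_replicate_of_mem fun b hb => by cases b <;> simp_all
    exact .inr ⟨u.length, z, by rw [← hu']⟩
  · exact .inl ⟨w.length, List.eq_replicate_of_mem fun b hb => by cases b <;> simp_all⟩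

lemma eq_deltaWord_or_modularStep_of_minHeight_eq_zero {w : List Bool} (hw : minHeight w = 0) :
    (∃ m, true :: w = deltaWord m 0 0) ∨ ∃ j w₁ w₂, ModularStep j (true :: w) w₁ w₂ := by
  obtain ⟨c, rfl⟩ | ⟨i, z, rfl⟩ := eq_replicate_true_or_eq_append_false w
  · exact .inl ⟨c + 1, by simp [deltaWord, List.replicate_succ]⟩
  · right
    have hz := minHeight_nonpos z
    rw [minHeight_replicate_true_append, minHeight_cons_false] at hw
    cases i with
    | zero => lia
    | succ i => exact ⟨_, _, _, modularStep_north (j := i) (by grind)⟩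

lemma eq_deltaWord_or_exists_modularStep (w : List Bool) :
    (∃ m n k, k ≤ min m n ∧ w = deltaWord m n k) ∨ ∃ j w₁ w₂, ModularStep j w w₁ w₂ := by
  induction w with
  | nil => exact .inl ⟨0, 0, 0, le_rfl, rfl⟩
  | cons b w ih =>
    cases b with
    | false =>
      obtain ⟨m, n, k, hk, rfl⟩ | ⟨j, w₁, w₂, h⟩ := ih
      · refine .inl ⟨m, n + 1, k, by lia, ?_⟩
        simp [deltaWord, Nat.succ_sub (hk.trans (min_le_right m n)), List.replicate_succ]
      · exact .inr ⟨j, _, _, h.cons (by simp)⟩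
    | true =>
      obtain hw | hw := (minHeight_nonpos w).eq_or_lt
      · exact (eq_deltaWord_or_modularStep_of_minHeight_eq_zero hw).imp_left
          fun ⟨m, h⟩ => ⟨m, 0, 0, Nat.zero_le _, h⟩
      obtain ⟨m, n, k, hk, rfl⟩ | ⟨j, w₁, w₂, h⟩ := ih
      · rw [minHeight_deltaWord] at hw
        obtain ⟨a, rfl⟩ : ∃ a, n = k + a + 1 := ⟨n - k - 1, by lia⟩
        cases a with
        | zero =>
          refine .inl ⟨m + 1, k + 1, k + 1, by lia, ?_⟩
          simp [deltaWord, List.replicate_succ]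
        | succ a =>
          rw [deltaWord_eq_append, show k + (a + 1) + 1 - k = a + 2 by lia]
          exact .inr ⟨_, _, _, modularStep_east (minHeight_staircase _ _)⟩
      · exact .inr ⟨j, _, _, h.cons fun _ => hw⟩

end ModularStep

lemma eval₂_sum_X_pow_eq_qint (j : ℕ) : Polynomial.eval₂ (Nat.castRingHom F) qq
    (∑ i ∈ Finset.range j, Polynomial.X ^ i) = qint j := by
  simp [qint, Polynomial.eval₂_finsetSum]

lemma hasAlternatingExpansion_wordElem {m n : ℕ} {w : List Bool} (hn : w.count true = m)
    (he : w.count false = n) :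
    HasAlternatingExpansion qq (fun k => wordElem (deltaWord m n k)) (mw m n w) (wordElem w) := by
  induction hN : inversions w using Nat.strong_induction_on generalizing w with
  | _ N ih =>
  subst hN
  obtain ⟨m', n', k, hk, rfl⟩ | ⟨j, w₁, w₂, h⟩ := eq_deltaWord_or_exists_modularStep w
  · rw [count_true_deltaWord n' (le_min_iff.1 hk).1] at hn
    rw [count_false_deltaWord m' (le_min_iff.1 hk).2] at he
    subst hn he
    rw [mw_deltaWord hk]
    exact hasAlternatingExpansion_self qq _ k
  · have hn₁ := (h.perm_left.count_eq true).trans hn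
    have he₁ := (h.perm_left.count_eq false).trans he
    have hn₂ := (h.perm_right.count_eq true).trans hn
    have he₂ := (h.perm_right.count_eq false).trans he
    have hmw₁ : mw m n w₁ = mw m n w := by
      have := mw_eq_add_minHeight hn he
      have := mw_eq_add_minHeight hn₁ he₁
      have := h.minHeight_left
      lia
    have hmw₂ : mw m n w = mw m n w₂ + 1 := by
      have := mw_eq_add_minHeight hn he
      have := mw_eq_add_minHeight hn₂ he₂
      have := h.minHeight_right
      lia
    have hexp₁ := ih _ h.inversions_left hn₁ he₁ rfl
    have hexp₂ := ih _ h.inversions_right hn₂ he₂ rfl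
    rw [hmw₁, hmw₂] at hexp₁
    rw [hmw₂, h.wordElem_eq]
    have hexp := hexp₁.smul_sub_smul hexp₂ (∑ i ∈ Finset.range (j + 1), Polynomial.X ^ i)
      (Polynomial.X * ∑ i ∈ Finset.range j, Polynomial.X ^ i)
    rwa [Polynomial.eval₂_mul, Polynomial.eval₂_X, eval₂_sum_X_pow_eq_qint,
      eval₂_sum_X_pow_eq_qint] at hexp

section LinearIndependence

/-- The weight `1 - q^i` of the operator by which `𝖾` acts on functions `ℤ → F`. -/
noncomputable def eastWeight (i : ℤ) : F := 1 - qq ^ i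

lemma eastWeight_zero : eastWeight 0 = 0 := by simp [eastWeight]

lemma eastWeight_ne_zero {i : ℤ} (hi : 0 < i) : eastWeight i ≠ 0 := by
  lift i to ℕ using hi.le
  rw [eastWeight, zpow_natCast, sub_ne_zero]
  intro h
  exact RatFunc.transcendental_X.pow (Int.natCast_pos.1 hi) (h ▸ isAlgebraic_one)

lemma one_add_qq_mul_eastWeight (i : ℤ) :
    (1 + qq) * eastWeight i = qq * eastWeight (i - 1) + eastWeight (i + 1) := by
  have hq : qq ≠ 0 := RatFunc.X_ne_zero
  simp only [eastWeight, zpow_sub_one₀ hq, zpow_add_one₀ hq]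
  field_simp
  ring

/-- The representation of `𝒫` on functions `ℤ → F` in which `𝗇` shifts by one and `𝖾` shifts back
with weight `1 - q^i`; it separates the staircase monomials. -/
noncomputable def shiftRep : PathAlg →ₐ[F] Module.End F (ℤ → F) :=
  RingQuot.liftAlgHom F ⟨FreeAlgebra.lift F fun b =>
    if b then LinearMap.funLeft F F (· + 1)
    else LinearMap.mulLeft F eastWeight ∘ₗ LinearMap.funLeft F F (· - 1), by
    rintro _ _ (_ | _) <;> ext f i <;>
      simp only [map_smul, map_mul, map_add, FreeAlgebra.lift_ι_apply, Bool.false_eq_true,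
        ↓reduceIte, LinearMap.smul_apply, LinearMap.add_apply, Module.End.mul_apply,
        LinearMap.comp_apply, LinearMap.funLeft_apply, LinearMap.mulLeft_apply, Pi.smul_apply,
        Pi.mul_apply, Pi.add_apply, smul_eq_mul, sub_add_cancel, add_sub_cancel_right]
    · linear_combination (eastWeight i * f (i - 1)) * one_add_qq_mul_eastWeight i
    · have h := one_add_qq_mul_eastWeight (i + 1)
      rw [add_sub_cancel_right] at h
      linear_combination f (i + 1) * h⟩

@[simp] lemma shiftRep_Pn_apply (f : ℤ → F) (i : ℤ) : shiftRep Pn f i = f (i + 1) := by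
  simp [shiftRep, Pn, LinearMap.funLeft]

@[simp] lemma shiftRep_Pe_apply (f : ℤ → F) (i : ℤ) :
    shiftRep Pe f i = eastWeight i * f (i - 1) := by
  simp [shiftRep, Pe, LinearMap.funLeft]

/-- The linear functional on `𝒫` sending `x` to the value at `i` of the function obtained by letting
`x` act on the constant function `1`. -/
noncomputable def valueAt (i : ℤ) : Module.Dual F PathAlg :=
  LinearMap.proj i ∘ₗ LinearMap.applyₗ 1 ∘ₗ shiftRep.toLinearMap

@[simp] lemma valueAt_one (i : ℤ) : valueAt i 1 = 1 := by
  simp [valueAt]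

@[simp] lemma valueAt_Pn_mul (i : ℤ) (x : PathAlg) : valueAt i (Pn * x) = valueAt (i + 1) x := by
  simp [valueAt]

@[simp] lemma valueAt_Pe_mul (i : ℤ) (x : PathAlg) :
    valueAt i (Pe * x) = eastWeight i * valueAt (i - 1) x := by
  simp [valueAt]

lemma valueAt_Pn_pow (c : ℕ) (i : ℤ) : valueAt i (Pn ^ c) = 1 := by
  induction c generalizing i with
  | zero => simp
  | succ c ih => rw [pow_succ', valueAt_Pn_mul, ih]

lemma valueAt_Pn_mul_Pe_pow_mul (b : ℕ) (i : ℤ) (x : PathAlg) :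
    valueAt i ((Pn * Pe) ^ b * x) = eastWeight (i + 1) ^ b * valueAt i x := by
  induction b with
  | zero => simp
  | succ b ih =>
    rw [pow_succ', mul_assoc, mul_assoc, valueAt_Pn_mul, valueAt_Pe_mul, add_sub_cancel_right, ih,
      pow_succ', mul_assoc]

lemma valueAt_Pe_pow_mul (a : ℕ) (i : ℤ) (x : PathAlg) :
    valueAt i (Pe ^ a * x) = (∏ j ∈ Finset.range a, eastWeight (i - j)) * valueAt (i - a) x := by
  induction a generalizing x with
  | zero => simp
  | succ a ih =>
    rw [pow_succ, mul_assoc, ih, valueAt_Pe_mul, Finset.prod_range_succ, mul_assoc, sub_sub,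
      Nat.cast_succ]

lemma wordElem_deltaWord (m n k : ℕ) :
    wordElem (deltaWord m n k) = Pe ^ (n - k) * ((Pn * Pe) ^ k * Pn ^ (m - k)) := by
  simp [deltaWord, wordElem, List.map_flatten, List.prod_flatten]

lemma valueAt_wordElem_deltaWord (m n k : ℕ) (i : ℤ) :
    valueAt i (wordElem (deltaWord m n k)) =
      (∏ j ∈ Finset.range (n - k), eastWeight (i - j)) * eastWeight (i - (n - k : ℕ) + 1) ^ k := by
  rw [wordElem_deltaWord, valueAt_Pe_pow_mul, valueAt_Pn_mul_Pe_pow_mul, valueAt_Pn_pow, mul_one]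

lemma linearIndepOn_wordElem_deltaWord (m n : ℕ) :
    LinearIndepOn F (fun k => wordElem (deltaWord m n k)) (Set.Iic n) := by
  refine linearIndependent_of_dual_triangular (fun k => valueAt (n - (k : ℕ))) ?_ ?_
  · rintro ⟨k, hk : k ≤ n⟩
    rw [valueAt_wordElem_deltaWord]
    refine mul_ne_zero (Finset.prod_ne_zero_iff.2 fun j hj => eastWeight_ne_zero ?_)
      (pow_ne_zero _ (eastWeight_ne_zero ?_))
    · have := Finset.mem_range.1 hj
      lia
    · lia
  · rintro ⟨k, hk : k ≤ n⟩ ⟨l, hl : l ≤ n⟩ (hlk : l < k)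
    have hzero : eastWeight ((n : ℤ) - k - (n - k : ℕ)) = 0 := by
      rw [Nat.cast_sub hk, sub_self, eastWeight_zero]
    rw [valueAt_wordElem_deltaWord,
      Finset.prod_eq_zero (Finset.mem_range.2 (by lia : n - k < n - l)) hzero, zero_mul]

end LinearIndependence

/-- Expansion in the staircase basis; conjecture of
Colmenarejo–Morales–Panova. -/
theorem stmt2 (m n : ℕ) (w : List Bool) (hn : w.count true = m) (he : w.count false = n) :
    ∃ c : ℕ → Polynomial ℕ,
      (wordElem w = ∑ k ∈ Finset.range (mw m n w + 1),
        (((-1 : F) ^ (mw m n w - k)) * Polynomial.eval₂ (Nat.castRingHom F) qq (c k)) •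
          wordElem (deltaWord m n k)) ∧
      ∀ d : ℕ → F,
        wordElem w = ∑ k ∈ Finset.range (min m n + 1), d k • wordElem (deltaWord m n k) →
        ∀ k, mw m n w < k → k ≤ min m n → d k = 0 := by
  obtain ⟨c, hc⟩ := hasAlternatingExpansion_wordElem hn he
  refine ⟨c, hc, fun d hd k hk hkmn => ?_⟩
  have hindep : LinearIndepOn F (fun k => wordElem (deltaWord m n k))
      (Finset.range (min m n + 1) : Set ℕ) :=
    (linearIndepOn_wordElem_deltaWord m n).mono fun i hi =>
      (Nat.lt_succ_iff.1 (Finset.mem_range.1 hi)).trans (min_le_right m n)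
  have hsub : Finset.range (mw m n w + 1) ⊆ Finset.range (min m n + 1) :=
    Finset.range_subset_range.2 (Nat.succ_le_succ (mw_le_min m n w))
  exact eq_zero_of_sum_smul_eq_sum_smul hindep hsub (hc.symm.trans hd)
    (Finset.mem_range.2 (by lia)) (by simpa using hk)
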